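/- arXiv:0912.1094 — 3 statements merged into one kernel-verified Lean document; each statement's English description precedes it below -/
import Mathlib

section
/- If in addition the shift T is nonsingular with respect to P, then for every n ∈ ℕ and P-almost every w ∈ 𝕏, the Radon–Nikodym derivative satisfies (Tⁿ)'(w) = ∏_{k∈ℤ} P_{k−n}({w_k}) / P_k({w_k}), the infinite product converging. -/
open MeasureTheory Filter Topology

noncomputable section

/-- The sequence space `{0,1}^ℤ`, with `true` playing the role of `1`. -/
abbrev Xspace := ℤ → Bool

/-- The left shift `(Tw)_i = w_{i+1}`. -/
def shiftT (w : Xspace) : Xspace := fun i => w (i + 1)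

/-- The inverse of the left shift, so that `P ∘ T = Measure.map shiftInv P`. -/
def shiftInv (w : Xspace) : Xspace := fun i => w (i - 1)

/-- `coordWt p b` is `P_k({b})` when `P_k({0}) = p`. -/
def coordWt (p : ℝ) (b : Bool) : ℝ := if b then 1 - p else p

/-- The set `A_t = {∏_{u=1}^t λ_u^{x_u} : x_u ∈ ℤ, |x_u| ≤ n_u}`. -/
def Aset (lam : ℕ → ℝ) (nn : ℕ → ℕ) (t : ℕ) : Set ℝ :=
  {x | ∃ c : ℕ → ℤ, (∀ u, |c u| ≤ (nn u : ℤ)) ∧ x = ∏ u ∈ Finset.Icc 1 t, lam u ^ c u}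

/-- The data of Kosloff's inductive construction: a summable sequence `ε_t > 0`,
`M_0 = 1`, `λ_t = exp(2^{-k_t})` with `k_t = ⌊log₂(M_{t-1}/ε_t)⌋ + 1`,
`n_t` a positive integer satisfying Property *, `N_t = M_{t-1} + n_t`,
`m_t = N_t (2 + 2^{3N_t})`, `M_t = N_t + m_t`. -/
structure KosloffData where
  eps : ℕ → ℝ
  lam : ℕ → ℝ
  nn : ℕ → ℕ
  M : ℕ → ℕ
  N : ℕ → ℕ
  m : ℕ → ℕ
  eps_pos : ∀ t, 1 ≤ t → 0 < eps t
  eps_summable : Summable eps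
  M_zero : M 0 = 1
  lam_def : ∀ t, 1 ≤ t →
    lam t = Real.exp ((2 : ℝ) ^ (-(⌊Real.logb 2 ((M (t - 1) : ℝ) / eps t)⌋ + 1)))
  nn_pos : ∀ t, 1 ≤ t → 0 < nn t
  prop_star : ∀ t, 1 ≤ t → ∀ a ∈ Aset lam nn (t - 1), a ^ 2 ≤ lam t ^ ((nn t : ℝ) / 4)
  N_def : ∀ t, 1 ≤ t → N t = M (t - 1) + nn t
  m_def : ∀ t, 1 ≤ t → m t = N t * (2 + 2 ^ (3 * N t))
  M_def : ∀ t, 1 ≤ t → M t = N t + m t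

/-- `P` is the product measure `∏_k P_k` of Kosloff's construction, where `p k = P_k({0})`:
`p k = 1/2` for `k ≥ 0`, `p k = 1/(1+λ_t)` for `-N_t < k ≤ -M_{t-1}`, and `p k = 1/2`
for `-M_t < k ≤ -N_t`; cylinders get product mass. -/
def IsKosloffMeasure (D : KosloffData) (p : ℤ → ℝ) (P : Measure Xspace) : Prop :=
  IsProbabilityMeasure P ∧
  (∀ k : ℤ, 0 ≤ k → p k = 1 / 2) ∧
  (∀ t : ℕ, 1 ≤ t → ∀ k : ℤ, -(D.N t : ℤ) < k → k ≤ -(D.M (t - 1) : ℤ) →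
      p k = 1 / (1 + D.lam t)) ∧
  (∀ t : ℕ, 1 ≤ t → ∀ k : ℤ, -(D.M t : ℤ) < k → k ≤ -(D.N t : ℤ) → p k = 1 / 2) ∧
  (∀ k l : ℤ, ∀ b : ℤ → Bool,
    P {w : Xspace | ∀ i ∈ Finset.Icc k l, w i = b i}
      = ∏ i ∈ Finset.Icc k l, ENNReal.ofReal (coordWt (p i) (b i)))

/-- The Radon–Nikodym derivative `(Tⁿ)' = d(P∘Tⁿ)/dP`. -/
def rnD (P : Measure Xspace) (n : ℕ) : Xspace → ENNReal :=
  Measure.rnDeriv (Measure.map (shiftInv^[n]) P) P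

/-- `T` is nonsingular: `P∘T` and `P` are mutually absolutely continuous. -/
def ShiftNonsingular (P : Measure Xspace) : Prop :=
  Measure.map shiftInv P ≪ P ∧ P ≪ Measure.map shiftInv P

/-- The ratio set `R(T,P)` of the shift. -/
def ratioSet (P : Measure Xspace) : Set ℝ :=
  {a | 0 ≤ a ∧ ∀ A : Set Xspace, MeasurableSet A → 0 < P A → ∀ ε : ℝ, 0 < ε → ∃ n : ℕ,
      0 < P (A ∩ shiftT^[n] ⁻¹' A ∩ {w | |(rnD P n w).toReal - a| ≤ ε})}

/-- `t(n) = min {t ≥ 1 : n < N_t}`. -/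
def tOf (D : KosloffData) (n : ℕ) : ℕ := sInf {t : ℕ | 1 ≤ t ∧ n < D.N t}

/-- `Υ_u(w) = ∑_{k=-N_u+1}^{-M_{u-1}} w_k`. -/
def Ups (D : KosloffData) (u : ℕ) (w : Xspace) : ℤ :=
  ∑ k ∈ Finset.Icc (-(D.N u : ℤ) + 1) (-(D.M (u - 1) : ℤ)), (if w k then 1 else 0)

/-- `f_t(w) = ∏_{u=1}^t λ_u^{Υ_u(w)}`. -/
def fT (D : KosloffData) (t : ℕ) (w : Xspace) : ℝ :=
  ∏ u ∈ Finset.Icc 1 t, D.lam u ^ Ups D u w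

/-- The ratio `P_{k-n}({w_k}) / P_k({w_k})`. -/
def rr (p : ℤ → ℝ) (n : ℕ) (w : Xspace) (k : ℤ) : ℝ :=
  coordWt (p (k - n)) (w k) / coordWt (p k) (w k)

/-- A general product measure on `{0,1}^ℤ` with `q k = P_k({1})`. -/
def IsProductMeasure (q : ℤ → ℝ) (P : Measure Xspace) : Prop :=
  IsProbabilityMeasure P ∧
  ∀ k l : ℤ, ∀ b : ℤ → Bool,
    P {w : Xspace | ∀ i ∈ Finset.Icc k l, w i = b i}
      = ∏ i ∈ Finset.Icc k l, ENNReal.ofReal (if b i then q i else 1 - q i)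

/-!
The density of one measure with respect to another, conditioned on the σ-algebra generated by a map
`g`, is the density of the pushforwards under `g`. For two infinite product measures and `g` the
restriction to a finite window, this is the finite product of the densities of the factors, so
Lévy's upward theorem along an exhausting sequence of windows gives the infinite product formula.
Here `P` and `P ∘ Tⁿ` are product measures with factors `P_k` and `P_{k-n}`.
-/

section MartingaleConvergence

variable {Ω : Type*} {mΩ : MeasurableSpace Ω} {μ ν : Measure Ω} [IsFiniteMeasure μ]
  [IsFiniteMeasure ν] {Y : ℕ → Type*} [mY : ∀ m, MeasurableSpace (Y m)] {g : ∀ m, Ω → Y m}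

theorem tendsto_ae_toReal_rnDeriv_map (hνμ : ν ≪ μ) (hg : ∀ m, Measurable (g m))
    (hmono : Monotone fun m => (mY m).comap (g m)) (hsup : mΩ ≤ ⨆ m, (mY m).comap (g m)) :
    ∀ᵐ w ∂μ, Tendsto (fun m => ((ν.map (g m)).rnDeriv (μ.map (g m)) (g m w)).toReal) atTop
      (𝓝 (ν.rnDeriv μ w).toReal) := by
  let ℱ : Filtration ℕ mΩ := ⟨fun m => (mY m).comap (g m), hmono, fun m => (hg m).comap_le⟩
  have hmeas : StronglyMeasurable[⨆ m, ℱ m] fun w => (ν.rnDeriv μ w).toReal :=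
    ((ν.measurable_rnDeriv μ).ennreal_toReal.mono hsup le_rfl).stronglyMeasurable
  filter_upwards [Measure.integrable_toReal_rnDeriv.tendsto_ae_condExp hmeas,
    ae_all_iff.2 fun m => toReal_rnDeriv_map hνμ (hg m)] with w hlim hcond
  exact hlim.congr fun m => (hcond m).symm

end MartingaleConvergence

section DiscreteDensity

variable {X : Type*} [Countable X] [MeasurableSpace X] [MeasurableSingletonClass X]
  {μ ν : Measure X} [IsFiniteMeasure μ]

theorem rnDeriv_ae_eq_singleton_div_singleton (hνμ : ν ≪ μ) :
    ∀ᵐ x ∂μ, ν.rnDeriv μ x = ν {x} / μ {x} := by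
  refine ae_iff_of_countable.2 fun x hx => ?_
  rw [ENNReal.eq_div_iff hx (measure_ne_top μ _), mul_comm, ← lintegral_singleton,
    Measure.setLIntegral_rnDeriv hνμ]

end DiscreteDensity

section FiniteProduct

variable {ι : Type*} [Fintype ι] {X : ι → Type*} [∀ i, MeasurableSpace (X i)]
  {μ ν : ∀ i, Measure (X i)} [∀ i, IsProbabilityMeasure (μ i)]

theorem lintegral_pi_prod {f : ∀ i, X i → ENNReal} (hf : ∀ i, Measurable (f i)) :
    ∫⁻ x, ∏ i, f i (x i) ∂Measure.pi μ = ∏ i, ∫⁻ a, f i a ∂μ i := by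
  rw [ProbabilityTheory.lintegral_prod_eq_prod_lintegral_of_indepFun _ _
    (ProbabilityTheory.iIndepFun_pi fun i => (hf i).aemeasurable)
    fun i => (hf i).comp (measurable_pi_apply i)]
  exact Finset.prod_congr rfl fun i _ => (measurePreserving_eval μ i).lintegral_comp (hf i)

theorem pi_withDensity {f : ∀ i, X i → ENNReal} (hf : ∀ i, Measurable (f i))
    [∀ i, SigmaFinite ((μ i).withDensity (f i))] :
    Measure.pi (fun i => (μ i).withDensity (f i))
      = (Measure.pi μ).withDensity fun x => ∏ i, f i (x i) := by
  refine Measure.pi_eq fun t ht => ?_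
  have indicator_box (x : ∀ i, X i) : (Set.univ.pi t).indicator (fun x => ∏ i, f i (x i)) x
      = ∏ i, (t i).indicator (f i) (x i) := by
    classical
    simp only [Set.indicator_apply, Set.mem_univ_pi, Finset.prod_ite_zero, Finset.mem_univ,
      forall_const]
  calc (Measure.pi μ).withDensity (fun x => ∏ i, f i (x i)) (Set.univ.pi t)
      = ∫⁻ x, ∏ i, (t i).indicator (f i) (x i) ∂Measure.pi μ := by
        rw [withDensity_apply _ (.univ_pi ht), ← lintegral_indicator (.univ_pi ht)]
        simp_rw [indicator_box]
    _ = ∏ i, ∫⁻ a, (t i).indicator (f i) a ∂μ i :=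
        lintegral_pi_prod fun i => (hf i).indicator (ht i)
    _ = ∏ i, (μ i).withDensity (f i) (t i) := by
        simp_rw [withDensity_apply _ (ht _), lintegral_indicator (ht _)]

theorem rnDeriv_pi_ae_eq_prod [∀ i, SigmaFinite (ν i)] (hνμ : ∀ i, ν i ≪ μ i) :
    (Measure.pi ν).rnDeriv (Measure.pi μ)
      =ᵐ[Measure.pi μ] fun x => ∏ i, (ν i).rnDeriv (μ i) (x i) := by
  have hdens (i : ι) : (μ i).withDensity ((ν i).rnDeriv (μ i)) = ν i :=
    Measure.withDensity_rnDeriv_eq _ _ (hνμ i)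
  have (i : ι) : SigmaFinite ((μ i).withDensity ((ν i).rnDeriv (μ i))) := by
    rw [hdens]
    infer_instance
  have hpi : Measure.pi ν
      = (Measure.pi μ).withDensity fun x => ∏ i, (ν i).rnDeriv (μ i) (x i) := by
    rw [← pi_withDensity fun i => (ν i).measurable_rnDeriv (μ i)]
    simp_rw [hdens]
  rw [hpi]
  exact Measure.rnDeriv_withDensity _ (by fun_prop)

end FiniteProduct

section InfiniteProduct

variable {ι : Type*} {X : ι → Type*}

theorem restrict_preimage_singleton_restrict (s : Finset ι) (b : ∀ i, X i) :
    s.restrict ⁻¹' {s.restrict b} = {w | ∀ i ∈ s, w i = b i} := by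
  ext w
  simp only [Set.mem_preimage, Set.mem_singleton_iff, funext_iff, Finset.restrict,
    Subtype.forall, Set.mem_ofPred_eq]

variable [∀ i, MeasurableSpace (X i)]

theorem monotone_comap_restrict {α : Type*} [Preorder α] {s : α → Finset ι} (hs : Monotone s) :
    Monotone fun m => MeasurableSpace.pi.comap ((s m).restrict (π := X)) :=
  fun _ _ hmn => Filtration.piFinset.mono (hs hmn)

theorem pi_le_iSup_comap_restrict {α : Type*} {s : α → Finset ι} (hcover : ∀ i, ∃ m, i ∈ s m) :
    (MeasurableSpace.pi : MeasurableSpace (∀ i, X i))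
      ≤ ⨆ m, MeasurableSpace.pi.comap (s m).restrict := by
  refine iSup_le fun i => ?_
  obtain ⟨m, hi⟩ := hcover i
  refine le_iSup_of_le m (Measurable.comap_le ?_)
  exact (measurable_pi_apply (X := fun j : s m => X j) ⟨i, hi⟩).comp (comap_measurable _)

theorem measurableSet_forall_mem_eq [∀ i, MeasurableSingletonClass (X i)] (s : Finset ι)
    (b : ∀ i, X i) : MeasurableSet {w : ∀ i, X i | ∀ i ∈ s, w i = b i} :=
  MeasurableSet.pi s.countable_toSet fun i _ => measurableSet_singleton (b i)

variable {μ : ∀ i, Measure (X i)} [∀ i, IsProbabilityMeasure (μ i)]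

theorem eq_infinitePi_of_map_restrict {P : Measure (∀ i, X i)}
    (h : ∀ s : Finset ι, ∃ t, s ⊆ t ∧ P.map t.restrict = Measure.pi fun i : t => μ i) :
    P = Measure.infinitePi μ := by
  refine IsProjectiveLimit.unique (fun s => ?_) (Measure.isProjectiveLimit_infinitePi μ)
  obtain ⟨t, hst, ht⟩ := h s
  calc P.map s.restrict
      = (P.map t.restrict).map (Finset.restrict₂ hst) := by
        rw [Measure.map_map (Finset.measurable_restrict₂ hst) t.measurable_restrict,
          Finset.restrict₂_comp_restrict]
    _ = Measure.pi fun i : s => μ i := by rw [ht, ← isProjectiveMeasureFamily_pi μ t s hst]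

variable {ν : ∀ i, Measure (X i)} [∀ i, IsProbabilityMeasure (ν i)]

theorem absolutelyContinuous_of_infinitePi (h : Measure.infinitePi ν ≪ Measure.infinitePi μ)
    (i : ι) : ν i ≪ μ i := by
  simpa only [Measure.infinitePi_map_eval] using h.map (measurable_pi_apply i)

theorem rnDeriv_map_restrict_infinitePi_ae_eq_prod (hνμ : ∀ i, ν i ≪ μ i) (s : Finset ι) :
    ∀ᵐ w ∂Measure.infinitePi μ, ((Measure.infinitePi ν).map s.restrict).rnDeriv
      ((Measure.infinitePi μ).map s.restrict) (s.restrict w)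
        = ∏ i ∈ s, (ν i).rnDeriv (μ i) (w i) := by
  have hwindow := rnDeriv_pi_ae_eq_prod fun i : s => hνμ i
  simp_rw [← Measure.infinitePi_map_restrict] at hwindow
  filter_upwards [ae_of_ae_map s.measurable_restrict.aemeasurable hwindow] with w hw
  exact hw.trans (Finset.prod_coe_sort s fun i => (ν i).rnDeriv (μ i) (w i))

theorem tendsto_prod_rnDeriv_infinitePi (h : Measure.infinitePi ν ≪ Measure.infinitePi μ)
    {s : ℕ → Finset ι} (hs : Monotone s) (hcover : ∀ i, ∃ m, i ∈ s m) :
    ∀ᵐ w ∂Measure.infinitePi μ,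
      Tendsto (fun m => ∏ i ∈ s m, ((ν i).rnDeriv (μ i) (w i)).toReal) atTop
        (𝓝 ((Measure.infinitePi ν).rnDeriv (Measure.infinitePi μ) w).toReal) := by
  filter_upwards [tendsto_ae_toReal_rnDeriv_map h (fun m => (s m).measurable_restrict)
    (monotone_comap_restrict hs) (pi_le_iSup_comap_restrict hcover),
    ae_all_iff.2 fun m => rnDeriv_map_restrict_infinitePi_ae_eq_prod
      (absolutelyContinuous_of_infinitePi h) (s m)] with w hlim hprod
  refine hlim.congr fun m => ?_
  rw [hprod, ENNReal.toReal_prod]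

end InfiniteProduct

theorem monotone_Icc_neg_natCast : Monotone fun m : ℕ => Finset.Icc (-(m : ℤ)) m :=
  fun _ _ hmn => Finset.Icc_subset_Icc (by omega) (by omega)

theorem exists_mem_Icc_neg_natCast (k : ℤ) : ∃ m : ℕ, k ∈ Finset.Icc (-(m : ℤ)) m :=
  ⟨k.natAbs, Finset.mem_Icc.2 (by omega)⟩

theorem measurable_shiftInv : Measurable shiftInv :=
  measurable_pi_lambda _ fun i => measurable_pi_apply (i - 1)

theorem preimage_shiftInv_setOf_forall_mem_Icc (k l : ℤ) (b : Xspace) :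
    shiftInv ⁻¹' {w | ∀ i ∈ Finset.Icc k l, w i = b i}
      = {w | ∀ i ∈ Finset.Icc (k - 1) (l - 1), w i = shiftT b i} := by
  ext w
  simp only [Set.mem_preimage, Set.mem_ofPred_eq, Finset.mem_Icc, shiftInv, shiftT]
  refine ⟨fun h i hi => ?_, fun h i hi => ?_⟩
  · simpa using h (i + 1) (by omega)
  · simpa using h (i - 1) (by omega)

namespace IsProductMeasure

variable {q q' : ℤ → ℝ} {P P' : Measure Xspace}

theorem map_shiftInv (hP : IsProductMeasure q P) :
    IsProductMeasure (fun k => q (k - 1)) (P.map shiftInv) := by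
  have := hP.1
  refine ⟨Measure.isProbabilityMeasure_map measurable_shiftInv.aemeasurable, fun k l b => ?_⟩
  rw [Measure.map_apply measurable_shiftInv (measurableSet_forall_mem_eq _ b),
    preimage_shiftInv_setOf_forall_mem_Icc, hP.2]
  refine Finset.prod_equiv (Equiv.addRight 1) (fun i => ?_) fun i _ => ?_
  · simp only [Finset.mem_Icc, Equiv.coe_addRight]
    omega
  · simp only [Equiv.coe_addRight, add_sub_cancel_right]
    rfl

theorem map_iterate_shiftInv (hP : IsProductMeasure q P) (n : ℕ) :
    IsProductMeasure (fun k => q (k - n)) (P.map shiftInv^[n]) := by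
  induction n with
  | zero => simpa using hP
  | succ n ih =>
    rw [Function.iterate_succ',
      ← Measure.map_map measurable_shiftInv (measurable_shiftInv.iterate n)]
    convert ih.map_shiftInv using 3
    push_cast
    ring

theorem isProbabilityMeasure_map_eval (hP : IsProductMeasure q P) (k : ℤ) :
    IsProbabilityMeasure (P.map (Function.eval k)) :=
  have := hP.1
  Measure.isProbabilityMeasure_map (measurable_pi_apply k).aemeasurable

theorem map_eval_singleton (hP : IsProductMeasure q P) (k : ℤ) (b : Bool) :
    P.map (Function.eval k) {b} = ENNReal.ofReal (if b then q k else 1 - q k) := by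
  rw [Measure.map_apply (measurable_pi_apply k) (measurableSet_singleton b)]
  simpa [Set.preimage] using hP.2 k k fun _ => b

theorem weight_nonneg (hP : IsProductMeasure q P) (k : ℤ) (b : Bool) :
    0 ≤ if b then q k else 1 - q k := by
  have := hP.isProbabilityMeasure_map_eval k
  have weight_le_one (c : Bool) : (if c then q k else 1 - q k) ≤ 1 := by
    rw [← ENNReal.ofReal_le_one, ← hP.map_eval_singleton]
    exact prob_le_one
  have h0 := weight_le_one false
  have h1 := weight_le_one true
  cases b <;> simp only [reduceIte, Bool.false_eq_true] at * <;> linarith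

theorem map_restrict_Icc (hP : IsProductMeasure q P) (k l : ℤ) :
    P.map (Finset.Icc k l).restrict
      = Measure.pi fun i : Finset.Icc k l => P.map (Function.eval (i : ℤ)) := by
  have := hP.isProbabilityMeasure_map_eval
  refine Measure.ext_of_singleton fun v => ?_
  obtain ⟨b, rfl⟩ : ∃ b : Xspace, (Finset.Icc k l).restrict b = v :=
    Subtype.surjective_restrict (β := fun _ => Bool) (· ∈ Finset.Icc k l) v
  rw [Measure.map_apply (Finset.measurable_restrict _) (measurableSet_singleton _),
    restrict_preimage_singleton_restrict, hP.2, Measure.pi_singleton, ← Finset.prod_coe_sort]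
  exact Finset.prod_congr rfl fun i _ => (hP.map_eval_singleton i (b i)).symm

theorem eq_infinitePi (hP : IsProductMeasure q P) :
    P = Measure.infinitePi fun k => P.map (Function.eval k) := by
  have := hP.isProbabilityMeasure_map_eval
  refine eq_infinitePi_of_map_restrict fun s => ?_
  obtain ⟨k, hk⟩ := s.bddBelow
  obtain ⟨l, hl⟩ := s.bddAbove
  exact ⟨Finset.Icc k l, fun i hi => Finset.mem_Icc.2 ⟨hk hi, hl hi⟩, hP.map_restrict_Icc k l⟩

theorem toReal_rnDeriv_map_eval_ae_eq (hP : IsProductMeasure q P) (hP' : IsProductMeasure q' P')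
    (hac : P' ≪ P) (k : ℤ) :
    ∀ᵐ w ∂P, ((P'.map (Function.eval k)).rnDeriv (P.map (Function.eval k)) (w k)).toReal
      = (if w k then q' k else 1 - q' k) / (if w k then q k else 1 - q k) := by
  have := hP.isProbabilityMeasure_map_eval k
  have := hP'.isProbabilityMeasure_map_eval k
  have hratio := rnDeriv_ae_eq_singleton_div_singleton (hac.map (measurable_pi_apply k))
  filter_upwards [ae_of_ae_map (measurable_pi_apply k).aemeasurable hratio] with w hw
  rw [hw, hP.map_eval_singleton, hP'.map_eval_singleton, ENNReal.toReal_div,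
    ENNReal.toReal_ofReal (hP'.weight_nonneg k _), ENNReal.toReal_ofReal (hP.weight_nonneg k _)]

end IsProductMeasure

theorem rnDeriv_eq_infinite_product_general {q q' : ℤ → ℝ} {P P' : Measure Xspace}
    (hP : IsProductMeasure q P) (hP' : IsProductMeasure q' P') (hac : P' ≪ P) :
    ∀ᵐ w ∂P, Tendsto (fun m : ℕ => ∏ k ∈ Finset.Icc (-(m : ℤ)) (m : ℤ),
        (if w k then q' k else 1 - q' k) / (if w k then q k else 1 - q k))
      atTop (𝓝 (P'.rnDeriv P w).toReal) := by
  have := hP.isProbabilityMeasure_map_eval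
  have := hP'.isProbabilityMeasure_map_eval
  have hac_pi : Measure.infinitePi (fun k => P'.map (Function.eval k))
      ≪ Measure.infinitePi fun k => P.map (Function.eval k) := by
    rwa [← hP.eq_infinitePi, ← hP'.eq_infinitePi]
  have hlim := tendsto_prod_rnDeriv_infinitePi hac_pi monotone_Icc_neg_natCast
    exists_mem_Icc_neg_natCast
  rw [← hP.eq_infinitePi, ← hP'.eq_infinitePi] at hlim
  filter_upwards [hlim, ae_all_iff.2 (hP.toReal_rnDeriv_map_eval_ae_eq hP' hac)] with w hw hratio
  simpa only [hratio] using hw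

/-- If moreover the shift is nonsingular, then for every `n` and `P`-a.e. `w`,
`(Tⁿ)'(w) = ∏_{k ∈ ℤ} P_{k-n}({w_k})/P_k({w_k})`, the infinite (symmetric) product
converging. -/
theorem rnDeriv_eq_infinite_product (q : ℤ → ℝ) (P : Measure Xspace)
    (hP : IsProductMeasure q P)
    (p : ℝ) (hp0 : 0 < p) (hp1 : p < 1) (hq : ∀ k : ℤ, p < q k ∧ q k < 1 - p)
    (hNS : ShiftNonsingular P) :
    ∀ n : ℕ, ∀ᵐ w ∂P,
      Tendsto (fun m : ℕ => ∏ k ∈ Finset.Icc (-(m : ℤ)) (m : ℤ),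
          (if w k then q (k - n) else 1 - q (k - n)) / (if w k then q k else 1 - q k))
        atTop (nhds ((rnD P n w).toReal)) := by
  exact fun n => rnDeriv_eq_infinite_product_general hP (hP.map_iterate_shiftInv n)
    (Measure.QuasiMeasurePreserving.iterate ⟨measurable_shiftInv, hNS.1⟩ n).absolutelyContinuous
end
end

section
/- With the choice of k_t and λ_t in the construction (λ_t = exp(2^{-k_t}), k_t = ⌊log₂(M_{t-1}/ε_t)⌋ + 1), for every n ∈ ℕ and every w ∈ 𝕏 one has e^{-∑_{u=t(n)+1}^{∞} ε_u} ≤ ∏_{k=-∞}^{-N_{t(n)}} P_{k−n}({w_k}) / P_k({w_k}) ≤ e^{∑_{u=t(n)+1}^{∞} ε_u}, and moreover ∏_{k=n}^{∞} P_{k−n}({w_k}) / P_k({w_k}) = 1; in particular the tail product ∏_{k=-∞}^{-N_{t(n)}} P_{k−n}({w_k}) / P_k({w_k}) tends to 1 uniformly in w as n → ∞. -/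
open MeasureTheory Filter Topology

noncomputable section

/-!
Relative to the fair coin, a coordinate in the `u`-th biased block carries the log-weight
`c_u(w_k)` with `|c_u| ≤ |log λ_u|`, and every other coordinate carries `0`. Hence
`log (P_{k-n}({w_k}) / P_k({w_k}))` is the sum over `u` of
`(1_{B_u}(k - n) - 1_{B_u}(k)) c_u(w_k)`, where `B_u` is the `u`-th block. The interval `B_u` and
its translate by `n` differ in at most `2n` points, so for `n < N_t` the block `u > t` contributes
at most `2n |log λ_u| ≤ M_{u-1} |log λ_u| ≤ ε_u` to the sum of `|log (P_{k-n} / P_k)|` over all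
`k ≤ -N_t`, whatever `w` is.
-/

lemma abs_sub_one_le_of_exp_neg_le_of_le_exp {x s : ℝ} (hlower : Real.exp (-s) ≤ x)
    (hupper : x ≤ Real.exp s) : |x - 1| ≤ Real.exp s - 1 := by
  have h_cosh : 1 ≤ (Real.exp s + Real.exp (-s)) / 2 := Real.cosh_eq s ▸ Real.one_le_cosh s
  rw [abs_le]
  constructor <;> linarith

lemma exists_hasProd_of_sum_abs_log_le {ι : Type*} {f : ι → ℝ} {s : ℝ} (hf : ∀ i, 0 < f i)
    (hs : ∀ S : Finset ι, ∑ i ∈ S, |Real.log (f i)| ≤ s) :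
    ∃ L, HasProd f L ∧ Real.exp (-s) ≤ L ∧ L ≤ Real.exp s := by
  have h_summable : Summable fun i => ‖Real.log (f i)‖ :=
    summable_of_sum_le (fun _ => norm_nonneg _) hs
  have h_tsum : |∑' i, Real.log (f i)| ≤ s :=
    (norm_tsum_le_tsum_norm h_summable).trans (h_summable.tsum_le_of_sum_le hs)
  refine ⟨Real.exp (∑' i, Real.log (f i)), ?_, Real.exp_le_exp.2 (abs_le.1 h_tsum).1,
    Real.exp_le_exp.2 (abs_le.1 h_tsum).2⟩
  simpa only [Function.comp_def, Real.exp_log (hf _)] using h_summable.of_norm.hasSum.rexp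

lemma tendsto_prod_Icc_neg_of_hasProd {α : Type*} [CommMonoid α] [TopologicalSpace α] {f : ℤ → α}
    {a : ℤ} {L : α} (hf : HasProd (fun k : Set.Iic a => f k) L) :
    Tendsto (fun M : ℕ => ∏ k ∈ Finset.Icc (-(M : ℤ)) a, f k) atTop (𝓝 L) := by
  have h_exhaust : Tendsto (fun M : ℕ => (Finset.Icc (-(M : ℤ)) a).subtype (· ∈ Set.Iic a))
      atTop atTop := by
    refine tendsto_atTop_finset_of_monotone
      (fun M M' hM => Finset.subtype_mono (Finset.Icc_subset_Icc_left (by omega)))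
      fun k => ⟨(k : ℤ).natAbs, ?_⟩
    have hk : (k : ℤ) ≤ a := k.2
    rw [Finset.mem_subtype, Finset.mem_Icc]
    omega
  refine (hf.comp h_exhaust).congr fun M => ?_
  exact Finset.prod_subtype_of_mem f fun k hk => (Finset.mem_Icc.1 hk).2

lemma sum_indicator_Ioc_add_le (S : Finset ℤ) (a : ℤ) (n : ℕ) :
    ∑ k ∈ S, (Set.Ioc a (a + n)).indicator (1 : ℤ → ℝ) k ≤ n := by
  have h_card : (S.filter (· ∈ Set.Ioc a (a + n))).card ≤ n :=
    calc (S.filter (· ∈ Set.Ioc a (a + n))).card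
        ≤ (Finset.Ioc a (a + n)).card := Finset.card_le_card fun k hk => by
          simpa using (Finset.mem_filter.1 hk).2
      _ = n := by simp
  simpa [Set.indicator_apply, Finset.sum_boole] using h_card

-- A point lying in just one of an interval and its translate is within `n` of an endpoint.
lemma abs_indicator_Ioc_sub_le (a b : ℤ) (n : ℕ) (k : ℤ) :
    |(Set.Ioc a b).indicator (1 : ℤ → ℝ) (k - n) - (Set.Ioc a b).indicator 1 k| ≤
      (Set.Ioc a (a + n)).indicator 1 k + (Set.Ioc b (b + n)).indicator 1 k := by
  simp only [Set.indicator_apply, Set.mem_Ioc, Pi.one_apply]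
  split_ifs <;> first | (exfalso; omega) | norm_num

lemma sum_abs_indicator_Ioc_sub_le (S : Finset ℤ) (a b : ℤ) (n : ℕ) :
    ∑ k ∈ S, |(Set.Ioc a b).indicator (1 : ℤ → ℝ) (k - n) - (Set.Ioc a b).indicator 1 k| ≤
      2 * n := by
  calc _ ≤ ∑ k ∈ S, ((Set.Ioc a (a + n)).indicator (1 : ℤ → ℝ) k +
          (Set.Ioc b (b + n)).indicator 1 k) :=
        Finset.sum_le_sum fun k _ => abs_indicator_Ioc_sub_le a b n k
    _ ≤ n + n := by
        rw [Finset.sum_add_distrib]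
        exact add_le_add (sum_indicator_Ioc_add_le S a n) (sum_indicator_Ioc_add_le S b n)
    _ = 2 * n := (two_mul _).symm

lemma zpow_neg_floor_logb_add_one_le_inv {b : ℕ} (hb : 1 < b) {y : ℝ} (hy : 0 < y) :
    (b : ℝ) ^ (-(⌊Real.logb b y⌋ + 1)) ≤ y⁻¹ := by
  rw [zpow_neg, Real.floor_logb_natCast hy.le]
  exact inv_anti₀ hy (Int.lt_zpow_succ_log_self hb y).le

lemma coordWt_half (b : Bool) : coordWt (1 / 2) b = 1 / 2 := by
  cases b <;> norm_num [coordWt]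

lemma coordWt_one_div_one_add_true {l : ℝ} (hl : 0 < l) :
    coordWt (1 / (1 + l)) true = l / (1 + l) := by
  simp only [coordWt, if_true]
  field_simp
  ring

lemma coordWt_one_div_one_add_pos {l : ℝ} (hl : 0 < l) (b : Bool) :
    0 < coordWt (1 / (1 + l)) b := by
  cases b
  · simp only [coordWt, Bool.false_eq_true, if_false]
    positivity
  · rw [coordWt_one_div_one_add_true hl]
    positivity

/-- The log-density of the symbol `b` with respect to the fair coin, under the coin that gives `0`
the mass `1 / (1 + l)`. -/
def logBias (l : ℝ) (b : Bool) : ℝ := Real.log (2 * coordWt (1 / (1 + l)) b)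

lemma coordWt_one_div_one_add_eq_half_mul_exp {l : ℝ} (hl : 0 < l) (b : Bool) :
    coordWt (1 / (1 + l)) b = 1 / 2 * Real.exp (logBias l b) := by
  have h_pos := coordWt_one_div_one_add_pos hl b
  rw [logBias, Real.exp_log (by positivity)]
  ring

lemma logBias_false_eq_logBias_inv_true {l : ℝ} (hl : 0 < l) :
    logBias l false = logBias l⁻¹ true := by
  rw [logBias, logBias, coordWt_one_div_one_add_true (inv_pos.2 hl)]
  simp only [coordWt, Bool.false_eq_true, if_false]
  congr 1
  field_simp
  ring

lemma abs_logBias_true_le {l : ℝ} (hl : 0 < l) : |logBias l true| ≤ |Real.log l| := by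
  rw [logBias, coordWt_one_div_one_add_true hl]
  rcases le_total 1 l with h_one | h_one
  · have h_ge : 1 ≤ 2 * (l / (1 + l)) := by field_simp; linarith
    have h_le : 2 * (l / (1 + l)) ≤ l := by field_simp; linarith
    exact abs_le_abs_of_nonneg (Real.log_nonneg h_ge) (Real.log_le_log (by positivity) h_le)
  · have h_ge : l ≤ 2 * (l / (1 + l)) := by field_simp; linarith
    have h_le : 2 * (l / (1 + l)) ≤ 1 := by field_simp; linarith
    exact abs_le_abs_of_nonpos (Real.log_nonpos (by positivity) h_le) (Real.log_le_log hl h_ge)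

lemma abs_logBias_le {l : ℝ} (hl : 0 < l) : ∀ b : Bool, |logBias l b| ≤ |Real.log l|
  | true => abs_logBias_true_le hl
  | false => by
    rw [logBias_false_eq_logBias_inv_true hl]
    simpa only [Real.log_inv, abs_neg] using abs_logBias_true_le (inv_pos.2 hl)

/-- The growth of the endpoints in Kosloff's construction: `M_0 < N_1 < M_1 < N_2 < ⋯`, with
`2 N_t ≤ M_t`. -/
structure IsBlockLayout (M N : ℕ → ℕ) : Prop where
  M_lt_N_succ : ∀ t, M t < N (t + 1)
  two_mul_N_le_M : ∀ t, 1 ≤ t → 2 * N t ≤ M t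

/-- The biased block `-N_{u+1} < k ≤ -M_u`, indexed so that no subtraction occurs. -/
def biasedBlock (M N : ℕ → ℕ) (u : ℕ) : Set ℤ := Set.Ioc (-(N (u + 1) : ℤ)) (-(M u : ℤ))

/-- `p k`, the mass of `0` at coordinate `k`, is `1 / (1 + λ_{u+1})` on `biasedBlock M N u` and
`1 / 2` at nonnegative coordinates and between the blocks. -/
structure IsBlockBiased (M N : ℕ → ℕ) (lam : ℕ → ℝ) (p : ℤ → ℝ) : Prop where
  eq_half_of_nonneg : ∀ k, 0 ≤ k → p k = 1 / 2
  eq_of_mem_biasedBlock : ∀ u, ∀ k ∈ biasedBlock M N u, p k = 1 / (1 + lam (u + 1))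
  eq_half_of_mem_Ioc : ∀ t, 1 ≤ t → ∀ k ∈ Set.Ioc (-(M t : ℤ)) (-(N t : ℤ)), p k = 1 / 2

/-- `t(n) = min {t ≥ 1 : n < N_t}`, for an arbitrary sequence `N`. -/
def firstExceeding (N : ℕ → ℕ) (n : ℕ) : ℕ := sInf {t : ℕ | 1 ≤ t ∧ n < N t}

section Blocks

variable {M N : ℕ → ℕ} {lam eps : ℕ → ℝ} {p : ℤ → ℝ}

namespace IsBlockLayout

lemma N_le_M (hMN : IsBlockLayout M N) {t : ℕ} (ht : 1 ≤ t) : N t ≤ M t := by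
  have := hMN.two_mul_N_le_M t ht
  omega

lemma strictMono_M (hMN : IsBlockLayout M N) : StrictMono M :=
  strictMono_nat_of_lt_succ fun t => (hMN.M_lt_N_succ t).trans_le (hMN.N_le_M t.succ_pos)

lemma notMem_biasedBlock_of_le (hMN : IsBlockLayout M N) {u U : ℕ} (hu : u < U) {k : ℤ}
    (hk : k ≤ -(M U : ℤ)) : k ∉ biasedBlock M N u := by
  have h_end : N (u + 1) ≤ M U :=
    (hMN.N_le_M u.succ_pos).trans (hMN.strictMono_M.monotone hu)
  rintro ⟨hk', -⟩
  omega

lemma firstExceeding_spec (hMN : IsBlockLayout M N) (n : ℕ) :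
    1 ≤ firstExceeding N n ∧ n < N (firstExceeding N n) := by
  have h_nonempty : {t : ℕ | 1 ≤ t ∧ n < N t}.Nonempty :=
    ⟨n + 1, n.succ_pos, hMN.strictMono_M.le_apply.trans_lt (hMN.M_lt_N_succ n)⟩
  exact Nat.sInf_mem h_nonempty

lemma tendsto_firstExceeding (hMN : IsBlockLayout M N) :
    Tendsto (firstExceeding N) atTop atTop := by
  refine tendsto_atTop.2 fun T => (eventually_ge_atTop (M T)).mono fun n hn => ?_
  obtain ⟨h_one, h_lt⟩ := hMN.firstExceeding_spec n
  by_contra! h_small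
  have h_end := (hMN.N_le_M h_one).trans (hMN.strictMono_M.monotone h_small.le)
  omega

end IsBlockLayout

namespace IsBlockBiased

lemma prod_rr_eq_one (hp : IsBlockBiased M N lam p) (n : ℕ) (w : Xspace) (m : ℤ) :
    ∏ k ∈ Finset.Icc (n : ℤ) m, rr p n w k = 1 := by
  refine Finset.prod_eq_one fun k hk => ?_
  have hnk : (n : ℤ) ≤ k := (Finset.mem_Icc.1 hk).1
  rw [rr, hp.eq_half_of_nonneg k (by omega), hp.eq_half_of_nonneg (k - n) (by omega),
    coordWt_half, div_self (by norm_num)]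

lemma coordWt_eq_half_mul_exp (hp : IsBlockBiased M N lam p) (hMN : IsBlockLayout M N)
    (hlam : ∀ u, 0 < lam (u + 1)) {t U : ℕ} (ht : 1 ≤ t) (htU : t ≤ U) (b : Bool) {k : ℤ}
    (hMk : -(M U : ℤ) < k) (hkN : k ≤ -(N t : ℤ)) :
    coordWt (p k) b = 1 / 2 * Real.exp (∑ u ∈ Finset.Ico t U,
      (biasedBlock M N u).indicator 1 k * logBias (lam (u + 1)) b) := by
  induction U, htU using Nat.le_induction with
  | base =>
    rw [hp.eq_half_of_mem_Ioc t ht k ⟨hMk, hkN⟩, coordWt_half, Finset.Ico_self, Finset.sum_empty,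
      Real.exp_zero, mul_one]
  | succ U htU ih =>
    rw [Finset.sum_Ico_succ_top htU]
    rcases lt_or_ge (-(M U : ℤ)) k with h_right | h_left
    · have h_notMem : k ∉ biasedBlock M N U := fun hk => hk.2.not_gt h_right
      rw [Set.indicator_of_notMem h_notMem, zero_mul, add_zero]
      exact ih h_right
    · have h_sum : ∑ u ∈ Finset.Ico t U,
          (biasedBlock M N u).indicator 1 k * logBias (lam (u + 1)) b = 0 :=
        Finset.sum_eq_zero fun u hu => by
          rw [Set.indicator_of_notMem
            (hMN.notMem_biasedBlock_of_le (Finset.mem_Ico.1 hu).2 h_left), zero_mul]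
      rw [h_sum, zero_add]
      by_cases h_mem : k ∈ biasedBlock M N U
      · rw [hp.eq_of_mem_biasedBlock U k h_mem, Set.indicator_of_mem h_mem, Pi.one_apply, one_mul,
          coordWt_one_div_one_add_eq_half_mul_exp (hlam U)]
      · have h_fair : k ≤ -(N (U + 1) : ℤ) := not_lt.1 fun hk => h_mem ⟨hk, h_left⟩
        rw [hp.eq_half_of_mem_Ioc (U + 1) U.succ_pos k ⟨hMk, h_fair⟩, coordWt_half,
          Set.indicator_of_notMem h_mem, zero_mul, Real.exp_zero, mul_one]

lemma rr_eq_exp (hp : IsBlockBiased M N lam p) (hMN : IsBlockLayout M N)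
    (hlam : ∀ u, 0 < lam (u + 1)) {t U : ℕ} (ht : 1 ≤ t) (htU : t ≤ U) {n : ℕ} (w : Xspace) {k : ℤ}
    (hMk : -(M U : ℤ) < k - n) (hkN : k ≤ -(N t : ℤ)) :
    rr p n w k = Real.exp (∑ u ∈ Finset.Ico t U,
      ((biasedBlock M N u).indicator 1 (k - n) - (biasedBlock M N u).indicator 1 k) *
        logBias (lam (u + 1)) (w k)) := by
  rw [rr, hp.coordWt_eq_half_mul_exp hMN hlam ht htU (w k) hMk (by omega),
    hp.coordWt_eq_half_mul_exp hMN hlam ht htU (w k) (by omega) hkN,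
    mul_div_mul_left _ _ (by norm_num), ← Real.exp_sub, ← Finset.sum_sub_distrib]
  simp only [sub_mul]

lemma rr_pos (hp : IsBlockBiased M N lam p) (hMN : IsBlockLayout M N)
    (hlam : ∀ u, 0 < lam (u + 1)) {t : ℕ} (ht : 1 ≤ t) (n : ℕ) (w : Xspace) {k : ℤ}
    (hkN : k ≤ -(N t : ℤ)) : 0 < rr p n w k := by
  obtain ⟨U, htU, hU⟩ : ∃ U, t ≤ U ∧ n + k.natAbs < U := ⟨t + n + k.natAbs + 1, by omega, by omega⟩
  have h_le : U ≤ M U := hMN.strictMono_M.le_apply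
  rw [hp.rr_eq_exp hMN hlam ht htU w (by omega) hkN]
  exact Real.exp_pos _

lemma abs_log_rr_le (hp : IsBlockBiased M N lam p) (hMN : IsBlockLayout M N)
    (hlam : ∀ u, 0 < lam (u + 1)) {t U : ℕ} (ht : 1 ≤ t) (htU : t ≤ U) {n : ℕ} (w : Xspace) {k : ℤ}
    (hMk : -(M U : ℤ) < k - n) (hkN : k ≤ -(N t : ℤ)) :
    |Real.log (rr p n w k)| ≤ ∑ u ∈ Finset.Ico t U,
      |(biasedBlock M N u).indicator 1 (k - n) - (biasedBlock M N u).indicator 1 k| *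
        |Real.log (lam (u + 1))| := by
  rw [hp.rr_eq_exp hMN hlam ht htU w hMk hkN, Real.log_exp]
  refine (Finset.abs_sum_le_sum_abs _ _).trans (Finset.sum_le_sum fun u _ => ?_)
  rw [abs_mul]
  exact mul_le_mul_of_nonneg_left (abs_logBias_le (hlam u) _) (abs_nonneg _)

lemma sum_abs_log_rr_le_sum_Ico (hp : IsBlockBiased M N lam p) (hMN : IsBlockLayout M N)
    (hlam : ∀ u, 0 < lam (u + 1)) {t U : ℕ} (ht : 1 ≤ t) (htU : t ≤ U) {n : ℕ} (w : Xspace)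
    {S : Finset ℤ} (hS : ∀ k ∈ S, -(M U : ℤ) < k - n ∧ k ≤ -(N t : ℤ)) :
    ∑ k ∈ S, |Real.log (rr p n w k)| ≤
      ∑ u ∈ Finset.Ico t U, 2 * n * |Real.log (lam (u + 1))| := by
  calc ∑ k ∈ S, |Real.log (rr p n w k)|
      ≤ ∑ k ∈ S, ∑ u ∈ Finset.Ico t U,
          |(biasedBlock M N u).indicator 1 (k - n) - (biasedBlock M N u).indicator 1 k| *
            |Real.log (lam (u + 1))| :=
        Finset.sum_le_sum fun k hk =>
          hp.abs_log_rr_le hMN hlam ht htU w (hS k hk).1 (hS k hk).2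
    _ = ∑ u ∈ Finset.Ico t U, (∑ k ∈ S,
          |(biasedBlock M N u).indicator 1 (k - n) - (biasedBlock M N u).indicator 1 k|) *
            |Real.log (lam (u + 1))| := by
        rw [Finset.sum_comm]
        simp only [Finset.sum_mul]
    _ ≤ ∑ u ∈ Finset.Ico t U, 2 * n * |Real.log (lam (u + 1))| :=
        Finset.sum_le_sum fun u _ => mul_le_mul_of_nonneg_right
          (sum_abs_indicator_Ioc_sub_le S _ _ n) (abs_nonneg _)

lemma sum_abs_log_rr_le_tsum (hp : IsBlockBiased M N lam p) (hMN : IsBlockLayout M N)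
    (hlam : ∀ u, 0 < lam (u + 1)) (heps : Summable eps)
    (hlam_eps : ∀ u, M u * |Real.log (lam (u + 1))| ≤ eps (u + 1)) {t : ℕ} (ht : 1 ≤ t) {n : ℕ}
    (hn : n < N t) (w : Xspace) {S : Finset ℤ} (hS : ∀ k ∈ S, k ≤ -(N t : ℤ)) :
    ∑ k ∈ S, |Real.log (rr p n w k)| ≤ ∑' u : ℕ, eps (t + 1 + u) := by
  obtain ⟨a, ha⟩ := S.bddBelow
  obtain ⟨U, htU, hU⟩ : ∃ U, t ≤ U ∧ n + a.natAbs < U := ⟨t + n + a.natAbs + 1, by omega, by omega⟩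
  have h_le : U ≤ M U := hMN.strictMono_M.le_apply
  have hS_bounds : ∀ k ∈ S, -(M U : ℤ) < k - n ∧ k ≤ -(N t : ℤ) := fun k hk =>
    ⟨by have := ha hk; omega, hS k hk⟩
  calc ∑ k ∈ S, |Real.log (rr p n w k)|
      ≤ ∑ u ∈ Finset.Ico t U, 2 * n * |Real.log (lam (u + 1))| :=
        hp.sum_abs_log_rr_le_sum_Ico hMN hlam ht htU w hS_bounds
    _ ≤ ∑ u ∈ Finset.Ico t U, eps (u + 1) := by
        refine Finset.sum_le_sum fun u hu => le_trans ?_ (hlam_eps u)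
        have h_end := (hMN.two_mul_N_le_M t ht).trans
          (hMN.strictMono_M.monotone (Finset.mem_Ico.1 hu).1)
        exact mul_le_mul_of_nonneg_right (by exact_mod_cast (by omega : 2 * n ≤ M u))
          (abs_nonneg _)
    _ = ∑ i ∈ Finset.range (U - t), eps (t + 1 + i) := by
        rw [Finset.sum_Ico_eq_sum_range]
        simp only [add_right_comm]
    _ ≤ ∑' u : ℕ, eps (t + 1 + u) := by
        refine (heps.comp_injective (add_right_injective (t + 1))).sum_le_tsum _ fun u _ => ?_
        rw [add_right_comm]
        exact (by positivity : (0 : ℝ) ≤ M (t + u) * |Real.log (lam (t + u + 1))|).trans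
          (hlam_eps (t + u))

lemma exists_tendsto_prod_rr (hp : IsBlockBiased M N lam p) (hMN : IsBlockLayout M N)
    (hlam : ∀ u, 0 < lam (u + 1)) (heps : Summable eps)
    (hlam_eps : ∀ u, M u * |Real.log (lam (u + 1))| ≤ eps (u + 1)) {t : ℕ} (ht : 1 ≤ t) {n : ℕ}
    (hn : n < N t) (w : Xspace) :
    ∃ L : ℝ, Tendsto (fun m : ℕ => ∏ k ∈ Finset.Icc (-(m : ℤ)) (-(N t : ℤ)), rr p n w k)
        atTop (𝓝 L) ∧
      Real.exp (-(∑' u : ℕ, eps (t + 1 + u))) ≤ L ∧ L ≤ Real.exp (∑' u : ℕ, eps (t + 1 + u)) := by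
  have h_pos : ∀ k : Set.Iic (-(N t : ℤ)), 0 < rr p n w k := fun k =>
    hp.rr_pos hMN hlam ht n w k.2
  have h_sum : ∀ S : Finset (Set.Iic (-(N t : ℤ))),
      ∑ k ∈ S, |Real.log (rr p n w k)| ≤ ∑' u : ℕ, eps (t + 1 + u) := fun S =>
    (Finset.sum_map S (Function.Embedding.subtype _) _).symm.trans_le
      (hp.sum_abs_log_rr_le_tsum hMN hlam heps hlam_eps ht hn w fun _ hk =>
        Finset.property_of_mem_map_subtype S hk)
  obtain ⟨L, hL, h_bounds⟩ := exists_hasProd_of_sum_abs_log_le h_pos h_sum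
  exact ⟨L, tendsto_prod_Icc_neg_of_hasProd hL, h_bounds⟩

end IsBlockBiased

end Blocks

lemma tendsto_exp_tsum_add_sub_one (eps : ℕ → ℝ) :
    Tendsto (fun t : ℕ => Real.exp (∑' u : ℕ, eps (t + 1 + u)) - 1) atTop (𝓝 0) := by
  have h_tail : Tendsto (fun t : ℕ => ∑' u : ℕ, eps (t + 1 + u)) atTop (𝓝 0) := by
    simpa only [Function.comp_def, add_comm] using
      (tendsto_sum_nat_add eps).comp (tendsto_add_atTop_nat 1)
  simpa using h_tail.rexp.sub_const 1

theorem tail_product_estimates_general {M N : ℕ → ℕ} {lam eps : ℕ → ℝ} {p : ℤ → ℝ}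
    (hMN : IsBlockLayout M N) (hp : IsBlockBiased M N lam p) (hlam : ∀ u, 0 < lam (u + 1))
    (heps : Summable eps) (hlam_eps : ∀ u, M u * |Real.log (lam (u + 1))| ≤ eps (u + 1)) :
    (∀ n : ℕ, ∀ w : Xspace,
      (∀ m : ℤ, (n : ℤ) ≤ m → ∏ k ∈ Finset.Icc (n : ℤ) m, rr p n w k = 1) ∧
      ∃ L : ℝ,
        Tendsto (fun m : ℕ =>
            ∏ k ∈ Finset.Icc (-(m : ℤ)) (-(N (firstExceeding N n) : ℤ)), rr p n w k)
          atTop (𝓝 L) ∧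
        Real.exp (-(∑' u : ℕ, eps (firstExceeding N n + 1 + u))) ≤ L ∧
        L ≤ Real.exp (∑' u : ℕ, eps (firstExceeding N n + 1 + u))) ∧
    (∀ δ : ℝ, 0 < δ → ∃ n₀ : ℕ, ∀ n : ℕ, n₀ ≤ n → ∀ w : Xspace, ∀ L : ℝ,
        Tendsto (fun m : ℕ =>
            ∏ k ∈ Finset.Icc (-(m : ℤ)) (-(N (firstExceeding N n) : ℤ)), rr p n w k)
          atTop (𝓝 L) → |L - 1| ≤ δ) := by
  have h_limit (n : ℕ) (w : Xspace) := hp.exists_tendsto_prod_rr hMN hlam heps hlam_eps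
    (hMN.firstExceeding_spec n).1 (hMN.firstExceeding_spec n).2 w
  refine ⟨fun n w => ⟨fun m _ => hp.prod_rr_eq_one n w m, h_limit n w⟩, fun δ hδ => ?_⟩
  obtain ⟨n₀, hn₀⟩ := (((tendsto_exp_tsum_add_sub_one eps).comp
    hMN.tendsto_firstExceeding).eventually_le_const hδ).exists_forall_of_atTop
  refine ⟨n₀, fun n hn w L hL => ?_⟩
  obtain ⟨L', hL', h_lower, h_upper⟩ := h_limit n w
  obtain rfl := tendsto_nhds_unique hL hL'
  exact (abs_sub_one_le_of_exp_neg_le_of_le_exp h_lower h_upper).trans (hn₀ n hn)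

namespace KosloffData

lemma isBlockLayout (D : KosloffData) : IsBlockLayout D.M D.N where
  M_lt_N_succ t := by
    have h_pos := D.nn_pos (t + 1) t.succ_pos
    rw [D.N_def (t + 1) t.succ_pos, Nat.add_sub_cancel]
    omega
  two_mul_N_le_M t ht := by
    rw [D.M_def t ht, D.m_def t ht, mul_add]
    omega

lemma M_pos (D : KosloffData) (t : ℕ) : 0 < D.M t :=
  calc 0 < D.M 0 := by rw [D.M_zero]; exact one_pos
    _ ≤ D.M t := D.isBlockLayout.strictMono_M.monotone t.zero_le

lemma lam_pos (D : KosloffData) (u : ℕ) : 0 < D.lam (u + 1) :=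
  D.lam_def (u + 1) u.succ_pos ▸ Real.exp_pos _

lemma M_mul_abs_log_lam_le (D : KosloffData) (u : ℕ) :
    D.M u * |Real.log (D.lam (u + 1))| ≤ D.eps (u + 1) := by
  have hM : (0 : ℝ) < D.M u := by exact_mod_cast D.M_pos u
  have heps := D.eps_pos (u + 1) u.succ_pos
  have h_zpow : (2 : ℝ) ^ (-(⌊Real.logb 2 (D.M u / D.eps (u + 1))⌋ + 1)) ≤
      (D.M u / D.eps (u + 1))⁻¹ := by
    exact_mod_cast zpow_neg_floor_logb_add_one_le_inv one_lt_two (div_pos hM heps)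
  rw [D.lam_def (u + 1) u.succ_pos, Real.log_exp, abs_of_pos (by positivity), mul_comm,
    ← le_div_iff₀ hM, ← inv_div (D.M u : ℝ)]
  exact h_zpow

end KosloffData

lemma IsKosloffMeasure.isBlockBiased {D : KosloffData} {p : ℤ → ℝ} {P : Measure Xspace}
    (hP : IsKosloffMeasure D p P) : IsBlockBiased D.M D.N D.lam p := by
  obtain ⟨-, h_nonneg, h_biased, h_fair, -⟩ := hP
  exact ⟨h_nonneg, fun u k hk => h_biased (u + 1) u.succ_pos k hk.1 hk.2,
    fun t ht k hk => h_fair t ht k hk.1 hk.2⟩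

/-- tail-product estimates: for every `n` and `w`,
`∏_{k=n}^{∞} P_{k-n}({w_k})/P_k({w_k}) = 1`, the negative tail product
`∏_{k=-∞}^{-N_{t(n)}} P_{k-n}({w_k})/P_k({w_k})` exists and lies in
`[e^{-∑_{u>t(n)} ε_u}, e^{∑_{u>t(n)} ε_u}]`; in particular it tends to `1` uniformly in `w`. -/
theorem tail_product_estimates (D : KosloffData) (p : ℤ → ℝ) (P : Measure Xspace)
    (hP : IsKosloffMeasure D p P) :
    (∀ n : ℕ, ∀ w : Xspace,
      (∀ m : ℤ, (n : ℤ) ≤ m → ∏ k ∈ Finset.Icc (n : ℤ) m, rr p n w k = 1) ∧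
      ∃ L : ℝ,
        Tendsto (fun M : ℕ =>
            ∏ k ∈ Finset.Icc (-(M : ℤ)) (-(D.N (tOf D n) : ℤ)), rr p n w k)
          atTop (nhds L) ∧
        Real.exp (-(∑' u : ℕ, D.eps (tOf D n + 1 + u))) ≤ L ∧
        L ≤ Real.exp (∑' u : ℕ, D.eps (tOf D n + 1 + u))) ∧
    (∀ δ : ℝ, 0 < δ → ∃ n₀ : ℕ, ∀ n : ℕ, n₀ ≤ n → ∀ w : Xspace, ∀ L : ℝ,
        Tendsto (fun M : ℕ =>
            ∏ k ∈ Finset.Icc (-(M : ℤ)) (-(D.N (tOf D n) : ℤ)), rr p n w k)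
          atTop (nhds L) → |L - 1| ≤ δ) := by
  exact tail_product_estimates_general D.isBlockLayout hP.isBlockBiased D.lam_pos D.eps_summable
    D.M_mul_abs_log_lam_le
end
end

section
/- For every t ≥ 1, every n with N_{t-1} ≤ n < M_{t-1} (so that t(n) = t) and every w ∈ 𝕏, one has the exact identity ∏_{k=-N_{t(n)}+1}^{n-1} P_{k−n}({w_k}) / P_k({w_k}) = ∏_{u=1}^{t(n)} λ_u^{Υ_u(Tⁿw) − Υ_u(w)}. -/
open MeasureTheory Filter Topology

noncomputable section

/-!
Compare each `P_k` with the fair coin: its density is `1` off the blocks `(-N_u, -M_{u-1}]`, and at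
`x ∈ {0, 1}` it is `2 / (1 + λ_u) * λ_u ^ x` on the `u`-th block. Over any window `(a, b]` with
`-M_t ≤ a ≤ -N_t` and `-1 ≤ b`, the product of the densities is therefore
`∏ u ≤ t, (2 / (1 + λ_u)) ^ n_u * λ_u ^ Υ_u`. After a shift of the index, the numerators
`P_{k-n}({w_k})` form such a product for `Tⁿ w`; the denominators form one for `w`. In the quotient
the constants cancel.
-/

section Intervals

variable {α R : Type*} [CommMonoid R]

lemma prod_Ioc_mul_prod_Ioc [LinearOrder α] [LocallyFiniteOrder α] (f : α → R) {a b c : α}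
    (hab : a ≤ b) (hbc : b ≤ c) :
    (∏ k ∈ Finset.Ioc a b, f k) * ∏ k ∈ Finset.Ioc b c, f k = ∏ k ∈ Finset.Ioc a c, f k := by
  rw [← Finset.Ioc_union_Ioc_eq_Ioc hab hbc,
    Finset.prod_union (Finset.Ioc_disjoint_Ioc_of_le le_rfl)]

lemma prod_Ioc_add_right [AddCommMonoid α] [PartialOrder α] [IsOrderedCancelAddMonoid α]
    [ExistsAddOfLE α] [LocallyFiniteOrder α] (f : α → R) (a b c : α) :
    ∏ k ∈ Finset.Ioc a b, f (k + c) = ∏ k ∈ Finset.Ioc (a + c) (b + c), f k := by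
  rw [← Finset.map_add_right_Ioc, Finset.prod_map]
  rfl

end Intervals

lemma shiftT_iterate_apply (n : ℕ) (w : Xspace) (k : ℤ) : shiftT^[n] w k = w (k + n) := by
  induction n generalizing k with
  | zero => simp
  | succ n ih =>
    rw [Function.iterate_succ_apply', shiftT, ih, Nat.cast_succ, add_assoc, add_comm (1 : ℤ)]

/-- The density at `b` of the coin with `P({0}) = p` relative to the fair coin. -/
def fairDensity (p : ℝ) (b : Bool) : ℝ := 2 * coordWt p b

lemma fairDensity_one_half (b : Bool) : fairDensity (1 / 2) b = 1 := by
  cases b <;> norm_num [fairDensity, coordWt]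

lemma fairDensity_one_div_one_add {l : ℝ} (hl : 1 + l ≠ 0) (b : Bool) :
    fairDensity (1 / (1 + l)) b = 2 / (1 + l) * if b then l else 1 := by
  have hcompl : 1 - 1 / (1 + l) = l / (1 + l) := by
    field_simp
    ring
  cases b
  · simp [fairDensity, coordWt, div_eq_mul_inv]
  · simp only [fairDensity, coordWt, if_true, hcompl]
    ring

lemma rr_eq_fairDensity_div (p : ℤ → ℝ) (n : ℕ) (w : Xspace) (k : ℤ) :
    rr p n w k = fairDensity (p (k - n)) (w k) / fairDensity (p k) (w k) :=
  (mul_div_mul_left _ _ two_ne_zero).symm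

namespace KosloffData

variable (D : KosloffData) {t : ℕ}

lemma lam_pos_s6 (ht : 1 ≤ t) : 0 < D.lam t := by
  rw [D.lam_def t ht]
  exact Real.exp_pos _

lemma M_sub_one_lt_N (ht : 1 ≤ t) : D.M (t - 1) < D.N t := by
  rw [D.N_def t ht]
  exact Nat.lt_add_of_pos_right (D.nn_pos t ht)

lemma N_le_m (ht : 1 ≤ t) : D.N t ≤ D.m t := by
  rw [D.m_def t ht]
  exact Nat.le_mul_of_pos_right _ (by positivity)

lemma N_le_M (ht : 1 ≤ t) : D.N t ≤ D.M t := by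
  rw [D.M_def t ht]
  exact Nat.le_add_right _ _

lemma N_strictMonoOn : StrictMonoOn D.N (Set.Ici 1) :=
  strictMonoOn_of_lt_add_one Set.ordConnected_Ici fun t _ ht _ =>
    (D.N_le_M ht).trans_lt (D.M_sub_one_lt_N (Nat.le_add_left 1 t))

lemma one_le_M (t : ℕ) : 1 ≤ D.M t := by
  induction t with
  | zero => exact D.M_zero.ge
  | succ t ih =>
    have hMN : D.M t < D.N (t + 1) := D.M_sub_one_lt_N (Nat.le_add_left 1 t)
    exact ih.trans (hMN.le.trans (D.N_le_M (Nat.le_add_left 1 t)))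

lemma tOf_eq (ht : 1 ≤ t) {n : ℕ} (hle : D.N (t - 1) ≤ n) (hlt : n < D.N t) : tOf D n = t := by
  refine IsLeast.csInf_eq ⟨⟨ht, hlt⟩, fun s ⟨hs, hns⟩ => ?_⟩
  by_contra! hst
  have hmono : D.N s ≤ D.N (t - 1) :=
    D.N_strictMonoOn.monotoneOn hs (by simp only [Set.mem_Ici]; omega) (Nat.le_sub_one_of_lt hst)
  omega

/-- The density of the coordinates of `v` in the block `(-N_u, -M_{u-1}]`, relative to fair
coins. -/
def blockDensity (u : ℕ) (v : Xspace) : ℝ :=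
  (2 / (1 + D.lam u)) ^ D.nn u * D.lam u ^ Ups D u v

lemma blockDensity_div_blockDensity {u : ℕ} (hu : 1 ≤ u) (v w : Xspace) :
    D.blockDensity u v / D.blockDensity u w = D.lam u ^ (Ups D u v - Ups D u w) := by
  have hlam := D.lam_pos_s6 hu
  rw [blockDensity, blockDensity, mul_div_mul_left _ _ (by positivity), zpow_sub₀ hlam.ne']

lemma lam_zpow_Ups (u : ℕ) (v : Xspace) :
    D.lam u ^ Ups D u v
      = ∏ k ∈ Finset.Ioc (-(D.N u : ℤ)) (-(D.M (u - 1) : ℤ)), if v k then D.lam u else 1 := by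
  rw [Ups, Finset.Icc_add_one_left_eq_Ioc, Finset.sum_boole, zpow_natCast, ← Finset.prod_filter,
    Finset.prod_const]

end KosloffData

/-- `p k = P_k({0})` are the marginals of Kosloff's construction: the conditions that
`IsKosloffMeasure` imposes on `p` alone. -/
structure IsKosloffMarginal (D : KosloffData) (p : ℤ → ℝ) : Prop where
  eq_half_of_nonneg : ∀ k : ℤ, 0 ≤ k → p k = 1 / 2
  eq_on_block : ∀ t : ℕ, 1 ≤ t → ∀ k : ℤ, -(D.N t : ℤ) < k → k ≤ -(D.M (t - 1) : ℤ) →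
    p k = 1 / (1 + D.lam t)
  eq_half_on_gap : ∀ t : ℕ, 1 ≤ t → ∀ k : ℤ, -(D.M t : ℤ) < k → k ≤ -(D.N t : ℤ) → p k = 1 / 2

lemma IsKosloffMeasure.isKosloffMarginal {D : KosloffData} {p : ℤ → ℝ} {P : Measure Xspace}
    (hP : IsKosloffMeasure D p P) : IsKosloffMarginal D p :=
  ⟨hP.2.1, hP.2.2.1, hP.2.2.2.1⟩

namespace IsKosloffMarginal

variable {D : KosloffData} {p : ℤ → ℝ} {t : ℕ} {a b : ℤ}

lemma prod_fairDensity_nonneg_eq_one (hp : IsKosloffMarginal D p) (v : Xspace) (b : ℤ) :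
    ∏ k ∈ Finset.Ioc (-1) b, fairDensity (p k) (v k) = 1 :=
  Finset.prod_eq_one fun k hk => by
    have hk_nonneg : 0 ≤ k := (Finset.mem_Ioc.1 hk).1
    rw [hp.eq_half_of_nonneg k hk_nonneg, fairDensity_one_half]

lemma prod_fairDensity_gap_eq_one (hp : IsKosloffMarginal D p) (v : Xspace) (ht : 1 ≤ t)
    (ha : -(D.M t : ℤ) ≤ a) (hb : b ≤ -(D.N t : ℤ)) :
    ∏ k ∈ Finset.Ioc a b, fairDensity (p k) (v k) = 1 :=
  Finset.prod_eq_one fun k hk => by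
    obtain ⟨hak, hkb⟩ := Finset.mem_Ioc.1 hk
    rw [hp.eq_half_on_gap t ht k (ha.trans_lt hak) (hkb.trans hb), fairDensity_one_half]

lemma prod_fairDensity_block (hp : IsKosloffMarginal D p) (v : Xspace) (ht : 1 ≤ t) :
    ∏ k ∈ Finset.Ioc (-(D.N t : ℤ)) (-(D.M (t - 1) : ℤ)), fairDensity (p k) (v k)
      = D.blockDensity t v := by
  have hlam := D.lam_pos_s6 ht
  have hcard : (Finset.Ioc (-(D.N t : ℤ)) (-(D.M (t - 1) : ℤ))).card = D.nn t := by
    rw [Int.card_Ioc, D.N_def t ht]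
    omega
  rw [KosloffData.blockDensity, D.lam_zpow_Ups, ← hcard, ← Finset.prod_const,
    ← Finset.prod_mul_distrib]
  refine Finset.prod_congr rfl fun k hk => ?_
  obtain ⟨hNk, hkM⟩ := Finset.mem_Ioc.1 hk
  rw [hp.eq_on_block t ht k hNk hkM, fairDensity_one_div_one_add (by positivity)]

lemma prod_fairDensity_Ioc_neg_M (hp : IsKosloffMarginal D p) (v : Xspace) (t : ℕ)
    (hb : -1 ≤ b) :
    ∏ k ∈ Finset.Ioc (-(D.M t : ℤ)) b, fairDensity (p k) (v k)
      = ∏ u ∈ Finset.Icc 1 t, D.blockDensity u v := by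
  induction t with
  | zero => simpa [D.M_zero] using hp.prod_fairDensity_nonneg_eq_one v b
  | succ t ih =>
    have ht : 1 ≤ t + 1 := Nat.le_add_left 1 t
    have hNM : D.N (t + 1) ≤ D.M (t + 1) := D.N_le_M ht
    have hMN : D.M t < D.N (t + 1) := D.M_sub_one_lt_N ht
    have hM : 1 ≤ D.M t := D.one_le_M t
    have hblock := hp.prod_fairDensity_block v ht
    rw [Nat.add_sub_cancel] at hblock
    rw [← prod_Ioc_mul_prod_Ioc _ (b := -(D.N (t + 1) : ℤ)) (by omega) (by omega),
      ← prod_Ioc_mul_prod_Ioc _ (a := -(D.N (t + 1) : ℤ)) (b := -(D.M t : ℤ)) (by omega) (by omega),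
      hp.prod_fairDensity_gap_eq_one v ht le_rfl le_rfl, hblock, ih, Finset.prod_Icc_succ_top ht,
      one_mul, mul_comm]

lemma prod_fairDensity_window (hp : IsKosloffMarginal D p) (v : Xspace) (ht : 1 ≤ t)
    (hMa : -(D.M t : ℤ) ≤ a) (haN : a ≤ -(D.N t : ℤ)) (hb : -1 ≤ b) :
    ∏ k ∈ Finset.Ioc a b, fairDensity (p k) (v k)
      = ∏ u ∈ Finset.Icc 1 t, D.blockDensity u v := by
  have hMN : D.M (t - 1) < D.N t := D.M_sub_one_lt_N ht
  rw [← hp.prod_fairDensity_Ioc_neg_M v t hb, ← prod_Ioc_mul_prod_Ioc _ hMa (by omega),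
    hp.prod_fairDensity_gap_eq_one v ht le_rfl haN, one_mul]

end IsKosloffMarginal

lemma prod_fairDensity_sub (p : ℤ → ℝ) (n : ℕ) (w : Xspace) (a b : ℤ) :
    ∏ k ∈ Finset.Ioc a b, fairDensity (p (k - n)) (w k)
      = ∏ k ∈ Finset.Ioc (a - n) (b - n), fairDensity (p k) (shiftT^[n] w k) := by
  simp only [sub_eq_add_neg, ← prod_Ioc_add_right, shiftT_iterate_apply, neg_add_cancel_right]

theorem finite_product_eq_lambda_powers_general {D : KosloffData} {p : ℤ → ℝ}
    (hp : IsKosloffMarginal D p) {t : ℕ} (ht : 1 ≤ t) {n : ℕ} (hn : n ≤ D.m t) (w : Xspace) :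
    ∏ k ∈ Finset.Icc (-(D.N t : ℤ) + 1) ((n : ℤ) - 1), rr p n w k
      = ∏ u ∈ Finset.Icc 1 t, D.lam u ^ (Ups D u (shiftT^[n] w) - Ups D u w) := by
  have hM : D.M t = D.N t + D.m t := D.M_def t ht
  calc
    _ = (∏ k ∈ Finset.Ioc (-(D.N t : ℤ) - n) (n - 1 - n), fairDensity (p k) (shiftT^[n] w k))
          / ∏ k ∈ Finset.Ioc (-(D.N t : ℤ)) (n - 1), fairDensity (p k) (w k) := by
      simp only [Finset.Icc_add_one_left_eq_Ioc, rr_eq_fairDensity_div, Finset.prod_div_distrib,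
        prod_fairDensity_sub]
    _ = (∏ u ∈ Finset.Icc 1 t, D.blockDensity u (shiftT^[n] w))
          / ∏ u ∈ Finset.Icc 1 t, D.blockDensity u w := by
      rw [hp.prod_fairDensity_window _ ht (by omega) (by omega) (by omega),
        hp.prod_fairDensity_window _ ht (by omega) le_rfl (by omega)]
    _ = _ := by
      rw [← Finset.prod_div_distrib]
      exact Finset.prod_congr rfl fun u hu =>
        D.blockDensity_div_blockDensity (Finset.mem_Icc.1 hu).1 _ _

/-- for `t ≥ 1` and `N_{t-1} ≤ n < M_{t-1}` one has `t(n) = t` and the exact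
identity `∏_{k=-N_t+1}^{n-1} P_{k-n}({w_k})/P_k({w_k}) = ∏_{u=1}^{t} λ_u^{Υ_u(Tⁿw)-Υ_u(w)}`. -/
theorem finite_product_eq_lambda_powers (D : KosloffData) (p : ℤ → ℝ) (P : Measure Xspace)
    (hP : IsKosloffMeasure D p P)
    (t : ℕ) (ht : 1 ≤ t) (n : ℕ) (h1 : D.N (t - 1) ≤ n) (h2 : n < D.M (t - 1)) :
    tOf D n = t ∧
    ∀ w : Xspace,
      ∏ k ∈ Finset.Icc (-(D.N t : ℤ) + 1) ((n : ℤ) - 1), rr p n w k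
        = ∏ u ∈ Finset.Icc 1 t, D.lam u ^ (Ups D u (shiftT^[n] w) - Ups D u w) := by
  have hnN : n < D.N t := h2.trans (D.M_sub_one_lt_N ht)
  exact ⟨D.tOf_eq ht h1 hnN, finite_product_eq_lambda_powers_general hP.isKosloffMarginal ht
    (hnN.le.trans (D.N_le_m ht))⟩
end
end
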